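/- arXiv:1809.10181 — 4 statements merged into one kernel-verified Lean document; each statement's English description precedes it below -/
import Mathlib

section
/- Let V be a real Hilbert space and E a real normed vector space. Let a : V × V → ℝ be a continuous bilinear form, B : E → (continuous bilinear forms on V) a continuous linear map with operator norm ‖B‖, and F : V → ℝ a continuous linear functional. For p ∈ E set A_p(w,φ) := a(w,φ) + (B p)(w,φ), and let c > 0. Suppose q, r ∈ E are such that A_q and A_r are both c-coercive, and let u_q, u_r ∈ V be the unique (Lax–Milgram) solutions of A_q(u_q, φ) = F(φ) and A_r(u_r, φ) = F(φ) for all φ ∈ V. Then the solution map is Lipschitz in the coefficient: ‖u_q − u_r‖_V ≤ c⁻² ‖B‖ ‖F‖ ‖q − r‖_E. -/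
set_option maxSynthPendingDepth 3

/-!
Subtracting the two equations gives `A_q (u_q - u_r) = -B (q - r) u_r` in the dual of `V`, so the
Lax–Milgram stability estimate applies twice: to `A_q`, bounding the difference by the size of
`B (q - r) u_r`, and to `A_r`, bounding `u_r` by the size of `F`. Each application costs a factor
`c⁻¹`.
-/

section Coercive

variable {𝕜 V : Type*} [NontriviallyNormedField 𝕜] [SeminormedAddCommGroup V] [NormedSpace 𝕜 V]

theorem mul_norm_le_opNorm_of_mul_norm_sq_le {f : V →L[𝕜] 𝕜} {c : ℝ} {u : V}
    (hf : c * ‖u‖ ^ 2 ≤ ‖f u‖) : c * ‖u‖ ≤ ‖f‖ := by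
  rcases (norm_nonneg u).eq_or_lt with hu | hu
  · simp [← hu]
  · refine le_of_mul_le_mul_right ?_ hu
    calc
      c * ‖u‖ * ‖u‖ = c * ‖u‖ ^ 2 := by ring
      _ ≤ ‖f u‖ := hf
      _ ≤ ‖f‖ * ‖u‖ := f.le_opNorm u

variable {σ : 𝕜 →+* 𝕜} [RingHomIsometric σ]

theorem mul_norm_sub_le_of_coercive {A₁ A₂ : V →SL[σ] V →L[𝕜] 𝕜} {c : ℝ}
    (hA₁ : ∀ w, c * ‖w‖ ^ 2 ≤ ‖A₁ w w‖) {u₁ u₂ : V} (h : A₁ u₁ = A₂ u₂) :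
    c * ‖u₁ - u₂‖ ≤ ‖A₁ - A₂‖ * ‖u₂‖ := by
  have residual : A₁ (u₁ - u₂) = -((A₁ - A₂) u₂) := by
    rw [map_sub, h, sub_apply, neg_sub]
  calc
    c * ‖u₁ - u₂‖ ≤ ‖A₁ (u₁ - u₂)‖ := mul_norm_le_opNorm_of_mul_norm_sq_le (hA₁ _)
    _ = ‖(A₁ - A₂) u₂‖ := by rw [residual, norm_neg]
    _ ≤ ‖A₁ - A₂‖ * ‖u₂‖ := (A₁ - A₂).le_opNorm u₂

theorem coefficient_to_solution_lipschitz_general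
    {E : Type*} [SeminormedAddCommGroup E] [NormedSpace 𝕜 E]
    (a : V →SL[σ] V →L[𝕜] 𝕜) (B : E →L[𝕜] V →SL[σ] V →L[𝕜] 𝕜) (F : V →L[𝕜] 𝕜)
    {c : ℝ} (hc : 0 < c) {q r : E}
    (hcoq : ∀ w, c * ‖w‖ ^ 2 ≤ ‖(a + B q) w w‖) (hcor : ∀ w, c * ‖w‖ ^ 2 ≤ ‖(a + B r) w w‖)
    {uq ur : V} (huq : (a + B q) uq = F) (hur : (a + B r) ur = F) :
    ‖uq - ur‖ ≤ c⁻¹ ^ 2 * ‖B‖ * ‖F‖ * ‖q - r‖ := by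
  have norm_ur : ‖ur‖ ≤ c⁻¹ * ‖F‖ := by
    rw [le_inv_mul_iff₀ hc, ← hur]
    exact mul_norm_le_opNorm_of_mul_norm_sq_le (hcor ur)
  have norm_forms_sub : ‖(a + B q) - (a + B r)‖ ≤ ‖B‖ * ‖q - r‖ := by
    rw [add_sub_add_left_eq_sub, ← map_sub]
    exact B.le_opNorm (q - r)
  calc
    ‖uq - ur‖ ≤ c⁻¹ * (‖(a + B q) - (a + B r)‖ * ‖ur‖) := by
      rw [le_inv_mul_iff₀ hc]
      exact mul_norm_sub_le_of_coercive hcoq (huq.trans hur.symm)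
    _ ≤ c⁻¹ * ((‖B‖ * ‖q - r‖) * (c⁻¹ * ‖F‖)) := by gcongr
    _ = c⁻¹ ^ 2 * ‖B‖ * ‖F‖ * ‖q - r‖ := by ring

end Coercive

/-- Lipschitz stability of the coefficient-to-solution operator: if `A_p = a + B p` is
`c`-coercive for `p = q, r` and `u_q, u_r` are the corresponding Lax–Milgram solutions of
`A_p(u_p, φ) = F(φ)`, then `‖u_q − u_r‖ ≤ c⁻² ‖B‖ ‖F‖ ‖q − r‖`. -/
theorem coefficient_to_solution_lipschitz
    {V E : Type*} [NormedAddCommGroup V] [InnerProductSpace ℝ V] [CompleteSpace V]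
    [NormedAddCommGroup E] [NormedSpace ℝ E]
    (a : V →L[ℝ] V →L[ℝ] ℝ) (B : E →L[ℝ] V →L[ℝ] V →L[ℝ] ℝ) (F : V →L[ℝ] ℝ)
    (c : ℝ) (hc : 0 < c) (q r : E)
    (hcoq : ∀ w : V, c * ‖w‖ ^ 2 ≤ a w w + B q w w)
    (hcor : ∀ w : V, c * ‖w‖ ^ 2 ≤ a w w + B r w w)
    (uq ur : V)
    (huq : ∀ φ : V, a uq φ + B q uq φ = F φ)
    (hur : ∀ φ : V, a ur φ + B r ur φ = F φ) :
    ‖uq - ur‖ ≤ c⁻¹ ^ 2 * ‖B‖ * ‖F‖ * ‖q - r‖ :=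
  coefficient_to_solution_lipschitz_general a B F hc
    (fun w ↦ (hcoq w).trans (le_abs_self _)) (fun w ↦ (hcor w).trans (le_abs_self _))
    (ContinuousLinearMap.ext huq) (ContinuousLinearMap.ext hur)
end

section
/- Let V be a real Hilbert space and E a real normed vector space. Let a : V × V → ℝ be a continuous bilinear form, B : E → (continuous bilinear forms on V) a continuous linear map with operator norm ‖B‖, and F : V → ℝ a continuous linear functional. For p ∈ E set A_p(w,φ) := a(w,φ) + (B p)(w,φ), and let c > 0. Suppose q, q+h ∈ E are such that A_q and A_{q+h} are both c-coercive, with Lax–Milgram solutions u_q, u_{q+h} of A_p(u_p, φ) = F(φ) for all φ ∈ V. Let ψ_h ∈ V be the unique solution of A_q(ψ_h, φ) = −(B h)(u_q, φ) for all φ ∈ V. Then: (i) ‖ψ_h‖_V ≤ c⁻² ‖B‖ ‖F‖ ‖h‖_E, and (ii) the quadratic remainder estimate ‖u_{q+h} − u_q − ψ_h‖_V ≤ c⁻³ ‖B‖² ‖F‖ ‖h‖²_E holds. In particular, if A_p is c-coercive for every p in an open set S ⊆ E, then the solution map p ↦ u_p is Fréchet differentiable on S, with derivative at q acting on h given by ψ_h.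 -/
set_option maxSynthPendingDepth 3

/-! A `c`-coercive form, read as an operator `A : V → V*`, satisfies `c ‖w‖ ≤ ‖A w‖`, and it is onto
by Lax–Milgram; the argument uses nothing else about it. Write `P = B h`, so that
`(A + P) u' = f = A u` and `A ψ = -P u`. Subtracting, `A (u' - u) = -P u'` and
`A (u' - u - ψ) = -P (u' - u)`. The lower bound, applied to `u'`, `u' - u` and `u' - u - ψ`, gains a
factor `c⁻¹` each time and a factor `‖P‖` the last two times, so the remainder is quadratic in `h`
with a constant independent of `h`. -/

section BoundedBelow

variable {𝕜 V W : Type*} [NontriviallyNormedField 𝕜]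
  [SeminormedAddCommGroup V] [NormedSpace 𝕜 V] [SeminormedAddCommGroup W] [NormedSpace 𝕜 W]
  {A P : V →L[𝕜] W} {c : ℝ}

theorem norm_le_of_bounded_below_of_eq_neg (hc : 0 < c) (hA : ∀ w, c * ‖w‖ ≤ ‖A w‖) {u v : V}
    (hv : A v = -P u) : ‖v‖ ≤ c⁻¹ * (‖P‖ * ‖u‖) := by
  rw [le_inv_mul_iff₀ hc]
  calc c * ‖v‖ ≤ ‖A v‖ := hA v
    _ = ‖P u‖ := by rw [hv, norm_neg]
    _ ≤ ‖P‖ * ‖u‖ := P.le_opNorm u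

theorem norm_le_of_linearized_eq (hc : 0 < c) (hA : ∀ w, c * ‖w‖ ≤ ‖A w‖) {u ψ : V}
    (hψ : A ψ = -P u) : ‖ψ‖ ≤ c⁻¹ ^ 2 * ‖P‖ * ‖A u‖ := by
  calc ‖ψ‖ ≤ c⁻¹ * (‖P‖ * ‖u‖) := norm_le_of_bounded_below_of_eq_neg hc hA hψ
    _ ≤ c⁻¹ * (‖P‖ * (c⁻¹ * ‖A u‖)) := by
        gcongr
        exact (le_inv_mul_iff₀ hc).2 (hA u)
    _ = c⁻¹ ^ 2 * ‖P‖ * ‖A u‖ := by ring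

theorem norm_sub_sub_le_of_linearized_eq (hc : 0 < c) (hA : ∀ w, c * ‖w‖ ≤ ‖A w‖)
    (hAP : ∀ w, c * ‖w‖ ≤ ‖(A + P) w‖) {u u' ψ : V} (hu : (A + P) u' = A u)
    (hψ : A ψ = -P u) : ‖u' - u - ψ‖ ≤ c⁻¹ ^ 3 * ‖P‖ ^ 2 * ‖A u‖ := by
  have hdiff : A (u' - u) = -P u' := by
    rw [map_sub, ← hu, add_apply, sub_add_cancel_left]
  have hrem : A (u' - u - ψ) = -P (u' - u) := by
    rw [map_sub, hdiff, hψ, map_sub, neg_sub_neg, neg_sub]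
  calc ‖u' - u - ψ‖ ≤ c⁻¹ * (‖P‖ * ‖u' - u‖) := norm_le_of_bounded_below_of_eq_neg hc hA hrem
    _ ≤ c⁻¹ * (‖P‖ * (c⁻¹ * (‖P‖ * ‖u'‖))) := by
        gcongr
        exact norm_le_of_bounded_below_of_eq_neg hc hA hdiff
    _ ≤ c⁻¹ * (‖P‖ * (c⁻¹ * (‖P‖ * (c⁻¹ * ‖A u‖)))) := by
        gcongr
        exact (le_inv_mul_iff₀ hc).2 (hu ▸ hAP u')
    _ = c⁻¹ ^ 3 * ‖P‖ ^ 2 * ‖A u‖ := by ring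

theorem exists_continuousLinearMap_rightInverse_of_bounded_below (hc : 0 < c)
    (hA : ∀ w, c * ‖w‖ ≤ ‖A w‖) (hsurj : Function.Surjective A) :
    ∃ R : W →L[𝕜] V, Function.RightInverse R A := by
  obtain ⟨R, hR⟩ := LinearMap.exists_rightInverse_of_surjective (A : V →ₗ[𝕜] W)
    (LinearMap.range_eq_top.2 hsurj)
  have hAR (f : W) : A (R f) = f := DFunLike.congr_fun hR f
  refine ⟨R.mkContinuous c⁻¹ fun f => ?_, hAR⟩
  rw [le_inv_mul_iff₀ hc]
  simpa only [hAR] using hA (R f)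

end BoundedBelow

theorem hasFDerivAt_of_isBigO_sq {𝕜 E V : Type*} [NontriviallyNormedField 𝕜]
    [NormedAddCommGroup E] [NormedSpace 𝕜 E] [NormedAddCommGroup V] [NormedSpace 𝕜 V]
    {f : E → V} {D : E →L[𝕜] V} {p : E}
    (h : (fun k => f (p + k) - f p - D k) =O[nhds 0] fun k => ‖k‖ ^ 2) : HasFDerivAt f D p :=
  hasFDerivAt_iff_isLittleO_nhds_zero.2 <|
    h.trans_isLittleO (Asymptotics.isLittleO_norm_pow_id one_lt_two)

section SolutionMap

variable {𝕜 V W E : Type*} [NontriviallyNormedField 𝕜]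
  [NormedAddCommGroup V] [NormedSpace 𝕜 V] [SeminormedAddCommGroup W] [NormedSpace 𝕜 W]
  [NormedAddCommGroup E] [NormedSpace 𝕜 E]
  {a : V →L[𝕜] W} {B : E →L[𝕜] V →L[𝕜] W} {f : W} {c : ℝ}

theorem norm_linearized_solution_le (hc : 0 < c) {q h : E}
    (hq : ∀ w, c * ‖w‖ ≤ ‖(a + B q) w‖) {uq ψ : V} (huq : (a + B q) uq = f)
    (hψ : (a + B q) ψ = -B h uq) : ‖ψ‖ ≤ c⁻¹ ^ 2 * ‖B‖ * ‖f‖ * ‖h‖ := by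
  calc ‖ψ‖ ≤ c⁻¹ ^ 2 * ‖B h‖ * ‖(a + B q) uq‖ := norm_le_of_linearized_eq hc hq hψ
    _ ≤ c⁻¹ ^ 2 * (‖B‖ * ‖h‖) * ‖f‖ := by
        rw [huq]
        gcongr
        exact B.le_opNorm h
    _ = c⁻¹ ^ 2 * ‖B‖ * ‖f‖ * ‖h‖ := by ring

theorem norm_solution_sub_sub_le (hc : 0 < c) {q h : E}
    (hq : ∀ w, c * ‖w‖ ≤ ‖(a + B q) w‖) (hqh : ∀ w, c * ‖w‖ ≤ ‖(a + B (q + h)) w‖)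
    {uq uqh ψ : V} (huq : (a + B q) uq = f) (huqh : (a + B (q + h)) uqh = f)
    (hψ : (a + B q) ψ = -B h uq) :
    ‖uqh - uq - ψ‖ ≤ c⁻¹ ^ 3 * ‖B‖ ^ 2 * ‖f‖ * ‖h‖ ^ 2 := by
  rw [map_add, ← add_assoc] at hqh huqh
  calc ‖uqh - uq - ψ‖ ≤ c⁻¹ ^ 3 * ‖B h‖ ^ 2 * ‖(a + B q) uq‖ :=
        norm_sub_sub_le_of_linearized_eq hc hq hqh (huqh.trans huq.symm) hψ
    _ ≤ c⁻¹ ^ 3 * (‖B‖ * ‖h‖) ^ 2 * ‖f‖ := by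
        rw [huq]
        gcongr
        exact B.le_opNorm h
    _ = c⁻¹ ^ 3 * ‖B‖ ^ 2 * ‖f‖ * ‖h‖ ^ 2 := by ring

theorem hasFDerivAt_solution (hc : 0 < c) {p : E} {sol : E → V} {D : E →L[𝕜] V}
    (hbelow : ∀ᶠ r in nhds p, ∀ w, c * ‖w‖ ≤ ‖(a + B r) w‖)
    (hsol : ∀ᶠ r in nhds p, (a + B r) (sol r) = f)
    (hD : ∀ k, (a + B p) (D k) = -B k (sol p)) : HasFDerivAt sol D p := by
  have htranslate : Filter.Tendsto (fun k => p + k) (nhds 0) (nhds p) := by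
    simpa only [add_zero] using (continuous_const_add p).tendsto 0
  refine hasFDerivAt_of_isBigO_sq (.of_bound (c⁻¹ ^ 3 * ‖B‖ ^ 2 * ‖f‖) ?_)
  filter_upwards [htranslate.eventually hbelow, htranslate.eventually hsol] with k hk hsolk
  rw [norm_pow, norm_norm]
  exact norm_solution_sub_sub_le hc hbelow.self_of_nhds hk hsol.self_of_nhds hsolk (hD k)

theorem coefficient_to_solution_frechet_differentiable_general (hc : 0 < c) {q h : E}
    (hq : ∀ w, c * ‖w‖ ≤ ‖(a + B q) w‖) (hqh : ∀ w, c * ‖w‖ ≤ ‖(a + B (q + h)) w‖)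
    {uq uqh ψ : V} (huq : (a + B q) uq = f) (huqh : (a + B (q + h)) uqh = f)
    (hψ : (a + B q) ψ = -B h uq) {S : Set E} (hS : IsOpen S)
    (hbelow : ∀ p ∈ S, ∀ w, c * ‖w‖ ≤ ‖(a + B p) w‖)
    (hsurj : ∀ p ∈ S, Function.Surjective (a + B p))
    {sol : E → V} (hsol : ∀ p ∈ S, (a + B p) (sol p) = f) :
    ‖ψ‖ ≤ c⁻¹ ^ 2 * ‖B‖ * ‖f‖ * ‖h‖ ∧
    ‖uqh - uq - ψ‖ ≤ c⁻¹ ^ 3 * ‖B‖ ^ 2 * ‖f‖ * ‖h‖ ^ 2 ∧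
    ∀ p ∈ S, ∃ D : E →L[𝕜] V, HasFDerivAt sol D p ∧
      ∀ k, (a + B p) (D k) = -B k (sol p) := by
  refine ⟨norm_linearized_solution_le hc hq huq hψ,
    norm_solution_sub_sub_le hc hq hqh huq huqh hψ, fun p hp => ?_⟩
  obtain ⟨R, hR⟩ :=
    exists_continuousLinearMap_rightInverse_of_bounded_below hc (hbelow p hp) (hsurj p hp)
  have hD (k : E) : (a + B p) ((-(R ∘L B.flip (sol p))) k) = -B k (sol p) := by
    rw [neg_apply, map_neg]
    exact congrArg Neg.neg (hR (B k (sol p)))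
  have hSp : ∀ᶠ r in nhds p, r ∈ S := hS.mem_nhds hp
  exact ⟨-(R ∘L B.flip (sol p)),
    hasFDerivAt_solution hc (hSp.mono hbelow) (hSp.mono hsol) hD, hD⟩

end SolutionMap

theorem mul_norm_le_norm_of_coercive {V : Type*} [SeminormedAddCommGroup V] [NormedSpace ℝ V]
    {A : V →L[ℝ] V →L[ℝ] ℝ} {c : ℝ} (hA : ∀ w, c * ‖w‖ ^ 2 ≤ A w w) (w : V) :
    c * ‖w‖ ≤ ‖A w‖ := by
  rcases (norm_nonneg w).eq_or_lt with hw | hw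
  · rw [← hw, mul_zero]
    exact norm_nonneg _
  · refine le_of_mul_le_mul_right ?_ hw
    calc c * ‖w‖ * ‖w‖ = c * ‖w‖ ^ 2 := by ring
      _ ≤ A w w := hA w
      _ ≤ ‖A w‖ * ‖w‖ := (Real.le_norm_self _).trans ((A w).le_opNorm w)

theorem surjective_of_coercive {V : Type*} [NormedAddCommGroup V] [InnerProductSpace ℝ V]
    [CompleteSpace V] {A : V →L[ℝ] V →L[ℝ] ℝ} {c : ℝ} (hc : 0 < c)
    (hA : ∀ w, c * ‖w‖ ^ 2 ≤ A w w) : Function.Surjective A := by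
  have hco : IsCoercive A := ⟨c, hc, fun w => by simpa only [sq, mul_assoc] using hA w⟩
  intro F
  refine ⟨hco.continuousLinearEquivOfBilin.symm ((InnerProductSpace.toDual ℝ V).symm F), ?_⟩
  ext φ
  rw [← hco.continuousLinearEquivOfBilin_apply, ContinuousLinearEquiv.apply_symm_apply,
    InnerProductSpace.toDual_symm_apply]

/-- First-order Fréchet differentiability of the coefficient-to-solution operator:
with `A_p = a + B p` `c`-coercive, `u_q, u_{q+h}` the Lax–Milgram solutions of
`A_p(u_p, φ) = F(φ)` and `ψ_h` the solution of the linearized equation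
`A_q(ψ_h, φ) = −(B h)(u_q, φ)`, one has (i) `‖ψ_h‖ ≤ c⁻²‖B‖‖F‖‖h‖`,
(ii) `‖u_{q+h} − u_q − ψ_h‖ ≤ c⁻³‖B‖²‖F‖‖h‖²`; and if `A_p` is `c`-coercive for every
`p` in an open set `S`, the solution map `p ↦ u_p` is Fréchet differentiable on `S`,
its derivative at `q` acting on `h` being the solution of the linearized equation. -/
theorem coefficient_to_solution_frechet_differentiable
    {V E : Type*} [NormedAddCommGroup V] [InnerProductSpace ℝ V] [CompleteSpace V]
    [NormedAddCommGroup E] [NormedSpace ℝ E]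
    (a : V →L[ℝ] V →L[ℝ] ℝ) (B : E →L[ℝ] V →L[ℝ] V →L[ℝ] ℝ) (F : V →L[ℝ] ℝ)
    (c : ℝ) (hc : 0 < c) (q h : E)
    (hcoq : ∀ w : V, c * ‖w‖ ^ 2 ≤ a w w + B q w w)
    (hcoqh : ∀ w : V, c * ‖w‖ ^ 2 ≤ a w w + B (q + h) w w)
    (uq uqh ψ : V)
    (huq : ∀ φ : V, a uq φ + B q uq φ = F φ)
    (huqh : ∀ φ : V, a uqh φ + B (q + h) uqh φ = F φ)
    (hψ : ∀ φ : V, a ψ φ + B q ψ φ = -(B h uq φ))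
    (S : Set E) (hS : IsOpen S)
    (hcoS : ∀ p ∈ S, ∀ w : V, c * ‖w‖ ^ 2 ≤ a w w + B p w w)
    (sol : E → V)
    (hsol : ∀ p ∈ S, ∀ φ : V, a (sol p) φ + B p (sol p) φ = F φ) :
    ‖ψ‖ ≤ c⁻¹ ^ 2 * ‖B‖ * ‖F‖ * ‖h‖ ∧
    ‖uqh - uq - ψ‖ ≤ c⁻¹ ^ 3 * ‖B‖ ^ 2 * ‖F‖ * ‖h‖ ^ 2 ∧
    ∀ p ∈ S, ∃ D : E →L[ℝ] V, HasFDerivAt sol D p ∧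
      ∀ k : E, ∀ φ : V, a (D k) φ + B p (D k) φ = -(B k (sol p) φ) := by
  simpa only [ContinuousLinearMap.ext_iff, add_apply, neg_apply] using
    coefficient_to_solution_frechet_differentiable_general hc
      (mul_norm_le_norm_of_coercive hcoq) (mul_norm_le_norm_of_coercive hcoqh)
      (ContinuousLinearMap.ext huq) (ContinuousLinearMap.ext huqh) (ContinuousLinearMap.ext hψ) hS
      (fun p hp => mul_norm_le_norm_of_coercive (hcoS p hp))
      (fun p hp => surjective_of_coercive hc (hcoS p hp))
      (fun p hp => ContinuousLinearMap.ext (hsol p hp))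
end

section
/- Let V, E and H be real Hilbert spaces. Let a : V × V → ℝ be a continuous bilinear form, B : E → (continuous bilinear forms on V) a continuous linear map, F : V → ℝ a continuous linear functional, and for p ∈ E set A_p(w,φ) := a(w,φ) + (B p)(w,φ). Let c > 0, let L : V → H be a continuous linear map, z ∈ H, q* ∈ E, ρ > 0, and let Q ⊆ E be a convex set. For p with A_p c-coercive, let u_p be the Lax–Milgram solution of A_p(u_p, φ) = F(φ) for all φ ∈ V, and define J(p) := (1/2)‖L u_p − z‖²_H + (ρ/2)‖p − q*‖²_E. Suppose A_p is c-coercive for every p ∈ Q and for every p in some open neighborhood of a point q ∈ Q, and suppose q is a local minimizer of J on Q. Let P ∈ V be the unique solution of the adjoint equation A_q(w, P) = ⟪L u_q − z, L w⟫_H for all w ∈ V. Then for every p ∈ Q the first-order optimality condition holds: ρ ⟪q − q*, p − q⟫_E − (B (p − q))(u_q, P) ≥ 0. -/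
set_option maxSynthPendingDepth 3

open scoped RealInnerProductSpace

/-!
The proof is the adjoint-state method. Write the state equation as `A p (u p) = f` with
`A p := a + B p`, regarded as an operator from `V` to the dual of the test space. Subtracting it
at `p` and at `q` gives `A q (u p - u q) = -(A p - A q) (u p)`. As `A q` is bounded below, this
yields `u p - u q = O(p - q)`, and then shows that `p ↦ A q (u p)` has derivative
`h ↦ -(B h) (u q)` at `q`. The adjoint equation says that the derivative of the misfit at `u q`
factors through `A q` as evaluation at `P`, so the chain rule needs only this derivative, never
one of `u` itself, and gives the misfit the derivative `h ↦ -(B h) (u q) P`. The optimality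
condition is nonnegativity of the derivative of the cost along the directions `p - q` pointing
into `Q`.
-/

open Asymptotics Filter Topology
open scoped NNReal

section SolutionMap

variable {𝕜 V W : Type*} [NontriviallyNormedField 𝕜]
  [NormedAddCommGroup V] [NormedSpace 𝕜 V] [NormedAddCommGroup W] [NormedSpace 𝕜 W] {K : ℝ≥0}

lemma one_sub_mul_norm_sub_le_of_apply_eq {T T' : V →L[𝕜] W} (hT : AntilipschitzWith K T)
    {v v' : V} (h : T' v' = T v) :
    (1 - K * ‖T' - T‖) * ‖v' - v‖ ≤ K * ‖(T' - T) v‖ := by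
  have hsplit : T (v' - v) = -((T' - T) v + (T' - T) (v' - v)) := by
    simp only [map_sub, sub_apply, h]
    abel
  have hbound : ‖v' - v‖ ≤ K * (‖(T' - T) v‖ + ‖T' - T‖ * ‖v' - v‖) :=
    calc ‖v' - v‖ ≤ K * ‖T (v' - v)‖ := hT.le_mul_norm (map_zero T) _
      _ = K * ‖(T' - T) v + (T' - T) (v' - v)‖ := by rw [hsplit, norm_neg]
      _ ≤ K * (‖(T' - T) v‖ + ‖T' - T‖ * ‖v' - v‖) := by
        gcongr
        exact norm_add_le_of_le le_rfl ((T' - T).le_opNorm _)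
  linarith

lemma isBigO_sub_of_apply_eq {E : Type*} [TopologicalSpace E] {A : E → V →L[𝕜] W} {u : E → V}
    {f : W} {s : Set E} {q : E} (hA : ContinuousWithinAt A s q) (hAq : AntilipschitzWith K (A q))
    (hu : ∀ p ∈ s, A p (u p) = f) (hq : q ∈ s) :
    (fun p ↦ u p - u q) =O[𝓝[s] q] fun p ↦ A p - A q := by
  have hsmall : ∀ᶠ p in 𝓝[s] q, K * ‖A p - A q‖ < 1 / 2 := by
    have hlim : Tendsto (fun p ↦ K * ‖A p - A q‖) (𝓝[s] q) (𝓝 0) := by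
      simpa using (tendsto_iff_norm_sub_tendsto_zero.1 hA).const_mul (K : ℝ)
    exact hlim.eventually_lt_const (by norm_num)
  refine IsBigO.of_bound (2 * (K * ‖u q‖)) ?_
  filter_upwards [hsmall, self_mem_nhdsWithin] with p hp hps
  have hperturb := one_sub_mul_norm_sub_le_of_apply_eq hAq ((hu p hps).trans (hu q hq).symm)
  calc ‖u p - u q‖ ≤ 2 * ((1 - K * ‖A p - A q‖) * ‖u p - u q‖) := by
        nlinarith [norm_nonneg (u p - u q)]
    _ ≤ 2 * (K * (‖A p - A q‖ * ‖u q‖)) := by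
        refine mul_le_mul_of_nonneg_left ?_ zero_le_two
        exact hperturb.trans (mul_le_mul_of_nonneg_left ((A p - A q).le_opNorm _) K.coe_nonneg)
    _ = 2 * (K * ‖u q‖) * ‖A p - A q‖ := by ring

lemma continuousWithinAt_of_apply_eq {E : Type*} [TopologicalSpace E] {A : E → V →L[𝕜] W}
    {u : E → V} {f : W} {s : Set E} {q : E} (hA : ContinuousWithinAt A s q)
    (hAq : AntilipschitzWith K (A q)) (hu : ∀ p ∈ s, A p (u p) = f) (hq : q ∈ s) :
    ContinuousWithinAt u s q :=
  tendsto_sub_nhds_zero_iff.1 <|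
    (isBigO_sub_of_apply_eq hA hAq hu hq).trans_tendsto (tendsto_sub_nhds_zero_iff.2 hA)

variable {E G : Type*} [NormedAddCommGroup E] [NormedSpace 𝕜 E]
  [NormedAddCommGroup G] [NormedSpace 𝕜 G]
  {A : E → V →L[𝕜] W} {A' : E →L[𝕜] V →L[𝕜] W} {u : E → V} {f : W} {s : Set E} {q : E}

lemma hasFDerivWithinAt_apply_of_apply_eq (hA : HasFDerivWithinAt A A' s q)
    (hAq : AntilipschitzWith K (A q)) (hu : ∀ p ∈ s, A p (u p) = f) (hq : q ∈ s) :
    HasFDerivWithinAt (fun p ↦ A q (u p)) (-A'.flip (u q)) s q := by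
  have hu_lim : (fun p ↦ u p - u q) =o[𝓝[s] q] fun _ ↦ (1 : ℝ) :=
    (isLittleO_one_iff ℝ).2 <| tendsto_sub_nhds_zero_iff.2 <|
      continuousWithinAt_of_apply_eq hA.continuousWithinAt hAq hu hq
  have hcross : (fun p ↦ (A p - A q) (u p - u q)) =o[𝓝[s] q] fun p ↦ p - q := by
    have hprod : (fun p ↦ ‖A p - A q‖ * ‖u p - u q‖) =o[𝓝[s] q] fun p ↦ ‖p - q‖ * 1 :=
      hA.isBigO_sub.norm_norm.mul_isLittleO hu_lim.norm_left
    simp only [mul_one] at hprod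
    exact (IsBigO.of_norm_le fun p ↦ (A p - A q).le_opNorm _).trans_isLittleO hprod.of_norm_right
  have hlin : (fun p ↦ (A p - A q - A' (p - q)) (u q)) =o[𝓝[s] q] fun p ↦ p - q :=
    ((ContinuousLinearMap.apply 𝕜 W (u q)).isBigO_comp _ _).trans_isLittleO hA.isLittleO
  refine .of_isLittleO <| (hlin.add hcross).neg_left.congr' ?_ .rfl
  filter_upwards [self_mem_nhdsWithin] with p hp
  simp only [sub_apply, map_sub, neg_apply, ContinuousLinearMap.flip_apply, hu p hp, hu q hq]
  abel

lemma hasFDerivWithinAt_comp_of_adjoint {j : V → G} {P : W →L[𝕜] G}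
    (hA : HasFDerivWithinAt A A' s q) (hAq : AntilipschitzWith K (A q))
    (hu : ∀ p ∈ s, A p (u p) = f) (hq : q ∈ s) (hj : HasFDerivAt j (P ∘L A q) (u q)) :
    HasFDerivWithinAt (fun p ↦ j (u p)) (-(P ∘L A'.flip (u q))) s q := by
  have hu_bigO : (fun p ↦ u p - u q) =O[𝓝[s] q] fun p ↦ p - q :=
    (isBigO_sub_of_apply_eq hA.continuousWithinAt hAq hu hq).trans hA.isBigO_sub
  have hu_cont : ContinuousWithinAt u s q :=
    continuousWithinAt_of_apply_eq hA.continuousWithinAt hAq hu hq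
  have hj_rem : (fun p ↦ j (u p) - j (u q) - (P ∘L A q) (u p - u q)) =o[𝓝[s] q] fun p ↦ p - q :=
    (hj.isLittleO.comp_tendsto hu_cont).trans_isBigO hu_bigO
  have hP := P.hasFDerivAt.comp_hasFDerivWithinAt q
    (hasFDerivWithinAt_apply_of_apply_eq hA hAq hu hq)
  refine .of_isLittleO <| (hj_rem.add hP.isLittleO).congr_left fun p ↦ ?_
  simp

end SolutionMap

section BilinearForm

variable {V W E H : Type*} [NormedAddCommGroup V] [NormedSpace ℝ V]
  [NormedAddCommGroup W] [NormedSpace ℝ W] [NormedAddCommGroup E]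
  [NormedAddCommGroup H] [InnerProductSpace ℝ H]

lemma antilipschitzWith_of_coercive {A : V →L[ℝ] V →L[ℝ] ℝ} {c : ℝ} (hc : 0 < c)
    (hA : ∀ w, c * ‖w‖ ^ 2 ≤ A w w) : AntilipschitzWith c⁻¹.toNNReal A := by
  refine ContinuousLinearMap.antilipschitz_of_bound A fun w ↦ ?_
  rw [Real.coe_toNNReal _ (inv_nonneg.2 hc.le), le_inv_mul_iff₀ hc]
  rcases (norm_nonneg w).eq_or_lt with hw | hw
  · simp [← hw]
  · refine le_of_mul_le_mul_right ?_ hw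
    calc c * ‖w‖ * ‖w‖ = c * ‖w‖ ^ 2 := by ring
      _ ≤ A w w := hA w
      _ ≤ ‖A w‖ * ‖w‖ := (le_abs_self _).trans ((A w).le_opNorm w)

lemma hasFDerivAt_half_mul_norm_sub_sq (L : V →L[ℝ] H) (z : H) (v : V) :
    HasFDerivAt (fun w ↦ 1 / 2 * ‖L w - z‖ ^ 2) (innerSL ℝ (L v - z) ∘L L) v := by
  refine ((L.hasFDerivAt.sub_const z).norm_sq.const_mul (1 / 2)).congr_fderiv ?_
  ext w
  simp

lemma hasFDerivWithinAt_misfit [NormedSpace ℝ E] {a : V →L[ℝ] W →L[ℝ] ℝ}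
    {B : E →L[ℝ] V →L[ℝ] W →L[ℝ] ℝ} {F : W →L[ℝ] ℝ} {L : V →L[ℝ] H} {z : H} {Q : Set E}
    {sol : E → V} {q : E} {K : ℝ≥0} {P : W} (hinfsup : AntilipschitzWith K (a + B q))
    (hsol : ∀ p ∈ Q, ∀ φ, a (sol p) φ + B p (sol p) φ = F φ) (hq : q ∈ Q)
    (hP : ∀ w, a w P + B q w P = ⟪L (sol q) - z, L w⟫) :
    HasFDerivWithinAt (fun p ↦ 1 / 2 * ‖L (sol p) - z‖ ^ 2) (-(B.flip (sol q)).flip P) Q q := by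
  have hadjoint : innerSL ℝ (L (sol q) - z) ∘L L =
      ContinuousLinearMap.apply ℝ ℝ P ∘L (a + B q) := by
    ext w
    exact (hP w).symm
  exact hasFDerivWithinAt_comp_of_adjoint (A := fun p ↦ a + B p)
    (j := fun w ↦ 1 / 2 * ‖L w - z‖ ^ 2)
    (B.hasFDerivWithinAt.const_add a) hinfsup
    (fun p hp ↦ ContinuousLinearMap.ext (hsol p hp)) hq
    (hadjoint ▸ hasFDerivAt_half_mul_norm_sub_sq L z (sol q))

theorem extended_identification_first_order_optimality_general [InnerProductSpace ℝ E]
    {a : V →L[ℝ] W →L[ℝ] ℝ} {B : E →L[ℝ] V →L[ℝ] W →L[ℝ] ℝ} {F : W →L[ℝ] ℝ} {L : V →L[ℝ] H}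
    {z : H} {qstar : E} {ρ : ℝ} {Q : Set E} {sol : E → V} {J : E → ℝ} {q : E} {K : ℝ≥0} {P : W}
    (hQ : StarConvex ℝ q Q) (hinfsup : AntilipschitzWith K (a + B q))
    (hsol : ∀ p ∈ Q, ∀ φ, a (sol p) φ + B p (sol p) φ = F φ)
    (hJ : ∀ p, J p = (1 / 2) * ‖L (sol p) - z‖ ^ 2 + (ρ / 2) * ‖p - qstar‖ ^ 2)
    (hmin : IsLocalMinOn J Q q)
    (hP : ∀ w, a w P + B q w P = ⟪L (sol q) - z, L w⟫) :
    ∀ p ∈ Q, 0 ≤ ρ * ⟪q - qstar, p - q⟫ - B (p - q) (sol q) P := by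
  intro p hp
  have hq : q ∈ Q := hQ.mem ⟨p, hp⟩
  have hreg : HasFDerivWithinAt (fun p ↦ ρ / 2 * ‖p - qstar‖ ^ 2)
      (ρ • innerSL ℝ (q - qstar)) Q q := by
    refine (((hasFDerivWithinAt_id q Q).sub_const qstar).norm_sq.const_mul (ρ / 2)).congr_fderiv ?_
    ext h
    simp only [smul_apply, ContinuousLinearMap.comp_id, smul_eq_mul, nsmul_eq_mul, id]
    ring
  have hcost : HasFDerivWithinAt J
      (-(B.flip (sol q)).flip P + ρ • innerSL ℝ (q - qstar)) Q q :=
    ((hasFDerivWithinAt_misfit hinfsup hsol hq hP).add hreg).congr (fun p _ ↦ hJ p) (hJ q)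
  have hnonneg := hmin.hasFDerivWithinAt_nonneg hcost
    (sub_mem_posTangentConeAt_of_segment_subset (hQ.segment_subset hp))
  rw [add_comm, ← sub_eq_add_neg] at hnonneg
  exact hnonneg

end BilinearForm

/-- First-order optimality condition for the abstract (extended) identification problem:
if `q ∈ Q` is a local minimizer on the convex set `Q` of
`J(p) = ½‖L u_p − z‖² + (ρ/2)‖p − q*‖²`, where `u_p` is the Lax–Milgram solution of
`A_p(u_p, φ) = F(φ)` with `A_p = a + B p` `c`-coercive on `Q` and on an open
neighborhood of `q`, and `P` solves the adjoint equation
`A_q(w, P) = ⟪L u_q − z, L w⟫` for all `w`, then for every `p ∈ Q`: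
`ρ⟪q − q*, p − q⟫ − (B(p − q))(u_q, P) ≥ 0`. -/
theorem extended_identification_first_order_optimality
    {V E H : Type*}
    [NormedAddCommGroup V] [InnerProductSpace ℝ V] [CompleteSpace V]
    [NormedAddCommGroup E] [InnerProductSpace ℝ E] [CompleteSpace E]
    [NormedAddCommGroup H] [InnerProductSpace ℝ H] [CompleteSpace H]
    (a : V →L[ℝ] V →L[ℝ] ℝ) (B : E →L[ℝ] V →L[ℝ] V →L[ℝ] ℝ) (F : V →L[ℝ] ℝ)
    (c : ℝ) (hc : 0 < c)
    (L : V →L[ℝ] H) (z : H) (qstar : E) (ρ : ℝ) (hρ : 0 < ρ)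
    (Q : Set E) (hQ : Convex ℝ Q)
    (sol : E → V)
    (hsol : ∀ p : E, (∀ w : V, c * ‖w‖ ^ 2 ≤ a w w + B p w w) →
      ∀ φ : V, a (sol p) φ + B p (sol p) φ = F φ)
    (J : E → ℝ)
    (hJ : ∀ p, J p = (1 / 2) * ‖L (sol p) - z‖ ^ 2 + (ρ / 2) * ‖p - qstar‖ ^ 2)
    (q : E) (hqQ : q ∈ Q)
    (hcoQ : ∀ p ∈ Q, ∀ w : V, c * ‖w‖ ^ 2 ≤ a w w + B p w w)
    (S : Set E) (hS : IsOpen S) (hqS : q ∈ S)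
    (hcoS : ∀ p ∈ S, ∀ w : V, c * ‖w‖ ^ 2 ≤ a w w + B p w w)
    (hmin : ∃ ε > 0, ∀ p ∈ Q, ‖p - q‖ < ε → J q ≤ J p)
    (P : V)
    (hP : ∀ w : V, a w P + B q w P = ⟪L (sol q) - z, L w⟫) :
    ∀ p ∈ Q, 0 ≤ ρ * ⟪q - qstar, p - q⟫ - B (p - q) (sol q) P := by
  obtain ⟨ε, hε, hlocal⟩ := hmin
  have hmin : IsLocalMinOn J Q q := Metric.nhdsWithin_basis_ball.eventually_iff.2
    ⟨ε, hε, fun p hp ↦ hlocal p hp.2 (mem_ball_iff_norm.1 hp.1)⟩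
  exact extended_identification_first_order_optimality_general (hQ.starConvex hqQ)
    (antilipschitzWith_of_coercive hc (hcoQ q hqQ)) (fun p hp ↦ hsol p (hcoQ p hp)) hJ hmin hP
end

section
/- Let E be a real normed vector space, K ⊆ E a convex set, θ > 0, and let J, R : E → ℝ be functionals such that J is twice continuously Fréchet differentiable and R is Fréchet differentiable at a point r ∈ K. Let q ∈ K and suppose: (i) D²J(x)(h,h) ≥ θ‖h‖² for every x on the segment joining q and r and every h ∈ E; (ii) J'(q)(p − q) ≥ 0 for all p ∈ K; (iii) R'(r)(p − r) ≥ 0 for all p ∈ K. Then θ ‖q − r‖² ≤ (J'(r) − R'(r))(r − q), and consequently ‖q − r‖ ≤ θ⁻¹ ‖J'(r) − R'(r)‖, where ‖J'(r) − R'(r)‖ is the operator norm of the continuous linear functional J'(r) − R'(r) on E. -/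
/-!
Evaluating a map `F` into the dual against the fixed vector `r - q` gives a scalar function, to
which the mean value theorem applies; coercivity of the derivative along `[q, r]` thus becomes
strong monotonicity of `F` between `q` and `r`. In the splitting
`(F r - g) (r - q) = (F r - F q) (r - q) + F q (r - q) + g (q - r)` the last two terms are
nonnegative by the variational inequalities, each tested at the other point.
-/

section MeanValue

variable {E : Type*} [NormedAddCommGroup E] [NormedSpace ℝ E]

theorem exists_mem_segment_clm_apply_sub_eq
    {G : Type*} [NormedAddCommGroup G] [NormedSpace ℝ G]
    {f : E → G} {f' : E → E →L[ℝ] G} {a b : E}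
    (hf : ∀ x ∈ segment ℝ a b, HasFDerivWithinAt f (f' x) (segment ℝ a b) x) (ℓ : G →L[ℝ] ℝ) :
    ∃ z ∈ segment ℝ a b, ℓ (f b - f a) = ℓ (f' z (b - a)) := by
  obtain ⟨z, hz, hmvt⟩ := domain_mvt (f := ℓ ∘ f)
    (fun x hx ↦ ℓ.hasFDerivAt.comp_hasFDerivWithinAt x (hf x hx)) (convex_segment a b)
    (left_mem_segment ℝ a b) (right_mem_segment ℝ a b)
  exact ⟨z, hz, (map_sub ℓ _ _).trans hmvt⟩

theorem le_sub_apply_sub_of_forall_segment_le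
    {F : E → E →L[ℝ] ℝ} {F' : E → E →L[ℝ] E →L[ℝ] ℝ} {q r : E} {c : ℝ}
    (hF : ∀ x ∈ segment ℝ q r, HasFDerivWithinAt F (F' x) (segment ℝ q r) x)
    (hle : ∀ x ∈ segment ℝ q r, c ≤ F' x (r - q) (r - q)) :
    c ≤ (F r - F q) (r - q) := by
  obtain ⟨z, hz, hmvt⟩ :=
    exists_mem_segment_clm_apply_sub_eq hF (ContinuousLinearMap.apply ℝ ℝ (r - q))
  exact (hle z hz).trans_eq hmvt.symm

end MeanValue

theorem norm_le_inv_mul_opNorm_of_mul_norm_sq_le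
    {𝕜 E G : Type*} [NontriviallyNormedField 𝕜] [SeminormedAddCommGroup E] [NormedSpace 𝕜 E]
    [SeminormedAddCommGroup G] [NormedSpace 𝕜 G] {θ : ℝ} (hθ : 0 < θ) {f : E →L[𝕜] G} {x : E}
    (h : θ * ‖x‖ ^ 2 ≤ ‖f x‖) : ‖x‖ ≤ θ⁻¹ * ‖f‖ := by
  rw [le_inv_mul_iff₀ hθ]
  rcases (norm_nonneg x).eq_or_lt with hzero | hpos
  · simp [← hzero]
  · refine le_of_mul_le_mul_right ?_ hpos
    calc θ * ‖x‖ * ‖x‖ = θ * ‖x‖ ^ 2 := by ring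
      _ ≤ ‖f x‖ := h
      _ ≤ ‖f‖ * ‖x‖ := f.le_opNorm x

/-- Here `F` and `g` play the roles of `J'` and `R' r`; `F` need not be a gradient. -/
theorem perturbation_bound_for_minimizers_general
    {E : Type*} [NormedAddCommGroup E] [NormedSpace ℝ E] {θ : ℝ} (hθ : 0 < θ)
    {F : E → E →L[ℝ] ℝ} {F' : E → E →L[ℝ] E →L[ℝ] ℝ} {g : E →L[ℝ] ℝ} {q r : E}
    (hF : ∀ x ∈ segment ℝ q r, HasFDerivWithinAt F (F' x) (segment ℝ q r) x)
    (hcoercive : ∀ x ∈ segment ℝ q r, θ * ‖r - q‖ ^ 2 ≤ F' x (r - q) (r - q))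
    (hq : 0 ≤ F q (r - q)) (hr : 0 ≤ g (q - r)) :
    θ * ‖q - r‖ ^ 2 ≤ (F r - g) (r - q) ∧ ‖q - r‖ ≤ θ⁻¹ * ‖F r - g‖ := by
  rw [norm_sub_rev q r]
  have hbound : θ * ‖r - q‖ ^ 2 ≤ (F r - g) (r - q) :=
    calc θ * ‖r - q‖ ^ 2 ≤ (F r - F q) (r - q) :=
          le_sub_apply_sub_of_forall_segment_le hF hcoercive
      _ ≤ (F r - F q) (r - q) + F q (r - q) + g (q - r) := by linarith
      _ = (F r - g) (r - q) := by
          simp only [sub_apply, map_sub]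
          ring
  exact ⟨hbound, norm_le_inv_mul_opNorm_of_mul_norm_sq_le hθ (hbound.trans (Real.le_norm_self _))⟩

/-- Abstract perturbation bound for minimizers: if `J` is twice continuously Fréchet
differentiable with `D²J(x)(h,h) ≥ θ‖h‖²` on the segment joining `q` and `r`, `R` is
Fréchet differentiable at `r`, `q, r ∈ K` with `K` convex, and the first-order
variational inequalities `J'(q)(p − q) ≥ 0` and `R'(r)(p − r) ≥ 0` hold for all `p ∈ K`,
then `θ‖q − r‖² ≤ (J'(r) − R'(r))(r − q)` and hence
`‖q − r‖ ≤ θ⁻¹‖J'(r) − R'(r)‖`. -/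
theorem perturbation_bound_for_minimizers
    {E : Type*} [NormedAddCommGroup E] [NormedSpace ℝ E]
    (K : Set E) (hK : Convex ℝ K) (θ : ℝ) (hθ : 0 < θ)
    (J R : E → ℝ) (hJ : ContDiff ℝ 2 J)
    (q r : E) (hq : q ∈ K) (hr : r ∈ K)
    (hR : DifferentiableAt ℝ R r)
    (hcoercive : ∀ x ∈ segment ℝ q r, ∀ h : E,
      θ * ‖h‖ ^ 2 ≤ fderiv ℝ (fderiv ℝ J) x h h)
    (hJfoc : ∀ p ∈ K, 0 ≤ fderiv ℝ J q (p - q))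
    (hRfoc : ∀ p ∈ K, 0 ≤ fderiv ℝ R r (p - r)) :
    θ * ‖q - r‖ ^ 2 ≤ (fderiv ℝ J r - fderiv ℝ R r) (r - q) ∧
      ‖q - r‖ ≤ θ⁻¹ * ‖fderiv ℝ J r - fderiv ℝ R r‖ := by
  have hJ' : Differentiable ℝ (fderiv ℝ J) :=
    (hJ.fderiv_right one_add_one_eq_two.le).differentiable one_ne_zero
  exact perturbation_bound_for_minimizers_general hθ
    (fun x _ ↦ (hJ' x).hasFDerivAt.hasFDerivWithinAt) (fun x hx ↦ hcoercive x hx (r - q))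
    (hJfoc r hr) (hRfoc q hq)
end
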